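/- Let (w̃, m̃, H̃) solve the cell problem: for each x ∈ 𝕋^d and Λ ∈ ℝ^d, (1/2)|Λ+∇_y w̃(x,Λ,y)|² + V(x,y) = ln m̃(x,Λ,y) + H̃(x,Λ) and −div_y(m̃(Λ+∇_y w̃)) = 0 in 𝒴^d with ∫_{𝒴^d} m̃ dy = 1, m̃ > 0. Then there exists a constant C, independent of x and Λ, such that for all x ∈ 𝕋^d and Λ ∈ ℝ^d: sup_{y∈𝒴^d} m̃(x,Λ,y) ≤ C, and sup_{y∈𝒴^d} |Λ + ∇_y w̃(x,Λ,y)| ≤ C + |Λ|. -/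

import Mathlib

open MeasureTheory Filter Topology Function

noncomputable section

/-- The unit cell `𝒴^d = [0,1)^d`. -/
def cube (d : ℕ) : Set (Fin d → ℝ) := Set.univ.pi fun _ => Set.Ico (0 : ℝ) 1

/-- `ℤ^d`-periodicity of a function on `ℝ^d`; functions on the torus `𝕋^d`
(and `𝒴^d`-periodic functions) are identified with such functions. -/
def ZPer {d : ℕ} (f : (Fin d → ℝ) → ℝ) : Prop :=
  ∀ (x : Fin d → ℝ) (k : Fin d → ℤ), f (fun i => x i + (k i : ℝ)) = f x

/-- The `i`-th partial derivative. -/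
def pder {d : ℕ} (i : Fin d) (f : (Fin d → ℝ) → ℝ) (x : Fin d → ℝ) : ℝ :=
  fderiv ℝ f x (Pi.single i 1)

/-- `V : 𝕋^d × ℝ^d → ℝ` smooth, `𝒴^d`-periodic in the second variable
(and periodic in the first, i.e. defined on the torus). -/
def SmoothV {d : ℕ} (V : (Fin d → ℝ) → (Fin d → ℝ) → ℝ) : Prop :=
  ContDiff ℝ (⊤ : ℕ∞) (uncurry V) ∧ (∀ y, ZPer fun x => V x y) ∧ (∀ x, ZPer (V x))

/-- `sup_{(x,y) ∈ 𝕋^d × 𝒴^d} V (x,y)` (by periodicity, the sup over all of `ℝ^d × ℝ^d`). -/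
def supV {d : ℕ} (V : (Fin d → ℝ) → (Fin d → ℝ) → ℝ) : ℝ :=
  ⨆ q : (Fin d → ℝ) × (Fin d → ℝ), V q.1 q.2

/-- `inf_{(x,y) ∈ 𝕋^d × 𝒴^d} V (x,y)`. -/
def infV {d : ℕ} (V : (Fin d → ℝ) → (Fin d → ℝ) → ℝ) : ℝ :=
  ⨅ q : (Fin d → ℝ) × (Fin d → ℝ), V q.1 q.2

/-- `(w, m, H)` is a classical solution of the cell problem at `(x, Λ)`:
`|Λ+∇_y w|²/2 + V(x,y) = ln m + H`, `-div_y(m (Λ+∇_y w)) = 0` in `𝒴^d`, `∫_{𝒴^d} m = 1`. -/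
def CellSolAt {d : ℕ} (V : (Fin d → ℝ) → (Fin d → ℝ) → ℝ)
    (x Λ : Fin d → ℝ) (w m : (Fin d → ℝ) → ℝ) (H : ℝ) : Prop :=
  ContDiff ℝ 2 w ∧ ZPer w ∧ ContDiff ℝ 1 m ∧ ZPer m ∧ (∀ y, 0 < m y) ∧
  (∀ y, (∑ i, (Λ i + pder i w y) ^ 2) / 2 + V x y = Real.log (m y) + H) ∧
  (∀ y, (∑ i, pder i (fun z => m z * (Λ i + pder i w z)) y) = 0) ∧
  (∫ y in cube d, m y) = 1


lemma cube_meas (d : ℕ) : MeasurableSet (cube d) :=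
  MeasurableSet.univ_pi fun _ => measurableSet_Ico

lemma cube_sub (d : ℕ) : cube d ⊆ Set.Icc 0 1 := by
  intro y hy
  rw [cube, Set.mem_univ_pi] at hy
  exact ⟨fun i => (hy i).1, fun i => (hy i).2.le⟩

lemma cube_vol (d : ℕ) : volume (cube d) = 1 := by
  simp [cube, volume_pi_pi]

instance cube_fin (d : ℕ) : IsFiniteMeasure (volume.restrict (cube d)) :=
  ⟨by rw [Measure.restrict_apply_univ, cube_vol]; exact ENNReal.one_lt_top⟩

lemma cube_int {d : ℕ} {f : (Fin d → ℝ) → ℝ} (hf : Continuous f) :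
    Integrable f (volume.restrict (cube d)) :=
  (hf.continuousOn.integrableOn_compact isCompact_Icc).mono_set (cube_sub d)

open scoped Pointwise in
lemma int_trans {d : ℕ} {f : (Fin d → ℝ) → ℝ} (hf : ZPer f) (z : Fin d → ℝ) :
    ∫ y in cube d, f (y + z) = ∫ y in cube d, f y := by
  have hfd : IsAddFundamentalDomain
      (Submodule.span ℤ (Set.range (Pi.basisFun ℝ (Fin d)))).toAddSubgroup (cube d) volume := by
    have := ZSpan.isAddFundamentalDomain' (Pi.basisFun ℝ (Fin d)) volume
    rwa [ZSpan.fundamentalDomain_pi_basisFun] at this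
  have : Countable (Submodule.span ℤ (Set.range (Pi.basisFun ℝ (Fin d)))).toAddSubgroup :=
    inferInstanceAs (Countable (Submodule.span ℤ (Set.range (Pi.basisFun ℝ (Fin d)))))
  have hfd2 := hfd.vadd_of_comm z
  have h1 := hfd.setIntegral_eq hfd2 (f := f) (by
    rintro ⟨g, hg⟩ x
    have hg' : ∀ i, ∃ k : ℤ, (k : ℝ) = g i := by
      have := (Pi.basisFun ℝ (Fin d)).mem_span_iff_repr_mem ℤ g
      rw [Submodule.mem_toAddSubgroup] at hg
      intro i
      have := this.1 hg i
      simpa using this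
    choose k hk using hg'
    have := hf x k
    rw [← this]
    congr 1
    ext i
    simp [hk, AddSubgroup.vadd_def, add_comm])
  rw [h1]
  have hmp : MeasurePreserving (fun y : Fin d → ℝ => y + z) volume volume :=
    measurePreserving_add_right volume z
  have := hmp.setIntegral_preimage_emb (measurableEmbedding_addRight z) f (z +ᵥ cube d)
  rw [← this]
  congr 2
  ext y
  simp [Set.mem_vadd_set_iff_neg_vadd_mem, add_comm y z]

lemma pder_cont {d : ℕ} {f : (Fin d → ℝ) → ℝ} (hf : ContDiff ℝ 1 f) (i : Fin d) :
    Continuous (pder i f) := by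
  unfold pder
  exact (hf.continuous_fderiv (by simp)).clm_apply continuous_const

lemma pder_c1 {d : ℕ} {f : (Fin d → ℝ) → ℝ} (hf : ContDiff ℝ 2 f) (i : Fin d) :
    ContDiff ℝ 1 (pder i f) := by
  unfold pder
  exact (hf.fderiv_right (m := 1) (by norm_num)).clm_apply contDiff_const

lemma ZPer.pder {d : ℕ} {f : (Fin d → ℝ) → ℝ} (hf : ZPer f) (i : Fin d) : ZPer (pder i f) := by
  intro x k
  unfold _root_.pder
  have h : (fun y : Fin d → ℝ => f (y + fun i => (k i : ℝ))) = f := by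
    ext y; exact hf y k
  have := fderiv_comp_add_right (𝕜 := ℝ) (f := f) (x := x) (fun i => (k i : ℝ))
  rw [h] at this
  rw [this]
  rfl

lemma deriv_int {d : ℕ} {g f : (Fin d → ℝ) → ℝ} (hg : Continuous g) (hf : ContDiff ℝ 1 f)
    (i : Fin d) :
    HasDerivAt (fun t : ℝ => ∫ y in cube d, g y * f (y + t • Pi.single i 1))
      (∫ y in cube d, g y * pder i f y) 0 := by
  have hc := pder_cont hf i
  have hF : Continuous (fun p : ℝ × (Fin d → ℝ) => g p.2 * pder i f (p.2 + p.1 • Pi.single i 1)) := by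
    fun_prop
  obtain ⟨B, hB⟩ := ((isCompact_Icc (a := (-1 : ℝ)) (b := 1)).prod
    (isCompact_Icc (a := (0 : Fin d → ℝ)) (b := 1))).exists_bound_of_continuousOn hF.continuousOn
  have := (hasDerivAt_integral_of_dominated_loc_of_deriv_le
    (μ := volume.restrict (cube d)) (x₀ := (0 : ℝ)) (s := Set.Icc (-1) 1)
    (F := fun t y => g y * f (y + t • Pi.single i 1))
    (F' := fun t y => g y * pder i f (y + t • Pi.single i 1)) (bound := fun _ => B)
    (Icc_mem_nhds (by norm_num) (by norm_num))
    (Eventually.of_forall fun t => Continuous.aestronglyMeasurable (by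
      have := hf.continuous; fun_prop))
    (cube_int (by have := hf.continuous; fun_prop))
    (Continuous.aestronglyMeasurable (by fun_prop))
    ?_ (integrable_const B) ?_).2
  · simpa using this
  · rw [ae_restrict_iff' (cube_meas d)]
    refine Eventually.of_forall fun y hy t ht => ?_
    exact hB (t, y) ⟨ht, cube_sub d hy⟩
  · refine Eventually.of_forall fun y t _ => ?_
    have h1 : HasFDerivAt f (fderiv ℝ f (y + t • Pi.single i 1)) (y + t • Pi.single i 1) :=
      ((hf.differentiable (by simp)) _).hasFDerivAt
    have h2 : HasDerivAt (fun t : ℝ => y + t • (Pi.single i 1 : Fin d → ℝ)) (Pi.single i 1) t := by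
      simpa using ((hasDerivAt_id t).smul_const (Pi.single i 1 : Fin d → ℝ)).const_add y
    exact (h1.comp_hasDerivAt t h2).const_mul (g y)

lemma ZPer.mul {d : ℕ} {f g : (Fin d → ℝ) → ℝ} (hf : ZPer f) (hg : ZPer g) :
    ZPer (fun y => f y * g y) := fun x k => by
  simp only [hf x k, hg x k]

lemma ZPer.shift {d : ℕ} {f : (Fin d → ℝ) → ℝ} (hf : ZPer f) (z : Fin d → ℝ) :
    ZPer (fun y => f (y + z)) := fun x k => by
  have := hf (x + z) k
  show f _ = f (x + z)
  rw [← this]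
  congr 1
  ext i
  simp only [Pi.add_apply]
  ring

lemma int_pder {d : ℕ} {f : (Fin d → ℝ) → ℝ} (hf : ContDiff ℝ 1 f) (hp : ZPer f) (i : Fin d) :
    ∫ y in cube d, pder i f y = 0 := by
  have h := deriv_int (g := fun _ => 1) continuous_const hf i
  simp only [one_mul, int_trans hp] at h
  exact h.unique (hasDerivAt_const _ _)

lemma pder_mul {d : ℕ} {f g : (Fin d → ℝ) → ℝ} (hf : ContDiff ℝ 1 f) (hg : ContDiff ℝ 1 g)
    (i : Fin d) (y : Fin d → ℝ) :
    pder i (fun z => f z * g z) y = f y * pder i g y + g y * pder i f y := by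
  unfold pder
  rw [fderiv_fun_mul (hf.differentiable (by simp) y) (hg.differentiable (by simp) y)]
  simp

lemma pder_pow {d : ℕ} {f : (Fin d → ℝ) → ℝ} (hf : ContDiff ℝ 1 f) (n : ℕ)
    (i : Fin d) (y : Fin d → ℝ) :
    pder i (fun z => f z ^ n) y = n * f y ^ (n - 1) * pder i f y := by
  unfold pder
  rw [fderiv_fun_pow n (hf.differentiable (by simp) y)]
  simp

lemma int_parts {d : ℕ} {f g : (Fin d → ℝ) → ℝ} (hf : ContDiff ℝ 1 f) (hg : ContDiff ℝ 1 g)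
    (pf : ZPer f) (pg : ZPer g) (i : Fin d) :
    ∫ y in cube d, f y * pder i g y = - ∫ y in cube d, g y * pder i f y := by
  have h := int_pder (hf.mul hg) (pf.mul pg) i
  simp only [pder_mul hf hg] at h
  have := pder_cont hf i
  have := pder_cont hg i
  have := hf.continuous
  have := hg.continuous
  rw [integral_add (cube_int (by fun_prop)) (cube_int (by fun_prop))] at h
  linarith

lemma pder_shift {d : ℕ} (f : (Fin d → ℝ) → ℝ) (z : Fin d → ℝ) (i : Fin d) (y : Fin d → ℝ) :
    pder i (fun y => f (y + z)) y = pder i f (y + z) := by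
  unfold pder
  rw [fderiv_comp_add_right]

/-- commuting the two derivatives, in the weak form valid for `C¹` functions -/
lemma int_swap {d : ℕ} {f g : (Fin d → ℝ) → ℝ} (hf : ContDiff ℝ 1 f) (hg : ContDiff ℝ 1 g)
    (pf : ZPer f) (pg : ZPer g) (i k : Fin d) :
    ∫ y in cube d, pder k f y * pder i g y = ∫ y in cube d, pder i f y * pder k g y := by
  have h1 := deriv_int (pder_cont hf k) hg i
  have h2 := deriv_int (pder_cont hg k) hf i
  have e : ∀ t : ℝ, ∫ y in cube d, pder k f y * g (y + t • Pi.single i 1) =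
      - ∫ y in cube d, pder k g y * f (y + (-t) • Pi.single i 1) := by
    intro t
    have hgs : ContDiff ℝ 1 (fun y => g (y + t • Pi.single i 1)) :=
      hg.comp (contDiff_id.add contDiff_const)
    have a := int_parts hgs hf (pg.shift (t • Pi.single i 1)) pf k
    simp only [mul_comm (pder k f _)]
    rw [a]
    simp only [pder_shift]
    congr 1
    have b := int_trans ((pf.shift ((-t) • Pi.single i 1)).mul (pg.pder k)) (t • Pi.single i 1)
    simp only [mul_comm (pder k g _)]
    rw [← b]
    congr 1
    ext y
    simp [add_assoc]
  simp only [e] at h1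
  have h3 : HasDerivAt (fun t : ℝ => -∫ y in cube d, pder k g y * f (y + (-t) • Pi.single i 1))
      (∫ y in cube d, pder k g y * pder i f y) 0 := by
    have h2' : HasDerivAt (fun t : ℝ => ∫ y in cube d, pder k g y * f (y + t • Pi.single i 1))
      (∫ y in cube d, pder k g y * pder i f y) (-0) := by simpa using h2
    have := (h2'.scomp (0 : ℝ) (hasDerivAt_neg (0 : ℝ))).neg
    simp only [neg_smul, one_smul, neg_neg] at this
    exact this
  rw [h1.unique h3]
  simp only [mul_comm]

lemma pder_symm {d : ℕ} {w : (Fin d → ℝ) → ℝ} (hw : ContDiff ℝ 2 w) (i k : Fin d)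
    (y : Fin d → ℝ) : pder k (pder i w) y = pder i (pder k w) y := by
  have hd : DifferentiableAt ℝ (fderiv ℝ w) y :=
    (hw.fderiv_right (m := 1) (by norm_num)).differentiable (by simp) y
  have e : ∀ i k, pder k (pder i w) y = fderiv ℝ (fderiv ℝ w) y (Pi.single k 1) (Pi.single i 1) := by
    intro i k
    unfold pder
    rw [fderiv_clm_apply hd (by fun_prop)]
    simp
  rw [e, e]
  exact (hw.contDiffAt.isSymmSndFDerivAt (by simp)) _ _

lemma pder_const_add {d : ℕ} (c : ℝ) (f : (Fin d → ℝ) → ℝ) (i : Fin d) (y : Fin d → ℝ) :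
    pder i (fun z => c + f z) y = pder i f y := by
  unfold pder
  rw [fderiv_const_add]

lemma alg_core {d : ℕ} (W : Fin d → Fin d → ℝ) (hW : ∀ i k, W i k = W k i) (a P v : Fin d → ℝ)
    (M : ℝ) (hM : 0 < M) (p : ℕ) (h : ∀ k, a k = M * (∑ i, P i * W i k + v k)) :
    ((p : ℝ) + 2) * (M ^ p * (∑ k, a k ^ 2) / 2 - M ^ (p + 2) * (∑ k, v k ^ 2) / 2) ≤
    ∑ i, ∑ k, (M * W i k + P i * a k) * (P k * ((p + 1) * M ^ p * a i) + M ^ (p + 1) * W i k) := by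
  have e : ∑ i, ∑ k, (M * W i k + P i * a k) * (P k * ((p + 1) * M ^ p * a i) + M ^ (p + 1) * W i k)
      = M ^ (p + 2) * (∑ i, ∑ k, W i k ^ 2) + (p + 1) * M ^ p * (∑ k, P k * a k) ^ 2
        + (p + 2) * M ^ (p + 1) * ∑ k, a k * ∑ i, P i * W i k := by
    have e1 : ∑ i, ∑ k, M * W i k * (P k * ((p + 1) * M ^ p * a i))
        = (p + 1) * M ^ (p + 1) * ∑ k, a k * ∑ i, P i * W i k := by
      simp only [Finset.mul_sum]
      refine Finset.sum_congr rfl fun i _ => Finset.sum_congr rfl fun k _ => ?_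
      rw [hW i k]; ring
    have e2 : ∑ i, ∑ k, P i * a k * (M ^ (p + 1) * W i k)
        = M ^ (p + 1) * ∑ k, a k * ∑ i, P i * W i k := by
      rw [Finset.sum_comm]
      simp only [Finset.mul_sum]
      refine Finset.sum_congr rfl fun i _ => Finset.sum_congr rfl fun k _ => ?_
      ring
    have e3 : ∑ i, ∑ k, P i * a k * (P k * ((p + 1) * M ^ p * a i))
        = (p + 1) * M ^ p * (∑ k, P k * a k) ^ 2 := by
      rw [sq, Finset.sum_mul_sum]
      simp only [Finset.mul_sum]
      refine Finset.sum_congr rfl fun i _ => Finset.sum_congr rfl fun k _ => ?_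
      ring
    have e4 : ∑ i, ∑ k, M * W i k * (M ^ (p + 1) * W i k)
        = M ^ (p + 2) * (∑ i, ∑ k, W i k ^ 2) := by
      simp only [Finset.mul_sum]
      refine Finset.sum_congr rfl fun i _ => Finset.sum_congr rfl fun k _ => ?_
      ring
    simp only [add_mul, mul_add, Finset.sum_add_distrib] at *
    linarith
  rw [e]
  have h1 : 0 ≤ M ^ (p + 2) * (∑ i, ∑ k, W i k ^ 2) := by positivity
  have h2 : 0 ≤ (p + 1) * M ^ p * (∑ k, P k * a k) ^ 2 := by positivity
  have h3 : M ^ p * (∑ k, a k ^ 2) / 2 - M ^ (p + 2) * (∑ k, v k ^ 2) / 2 ≤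
      M ^ (p + 1) * ∑ k, a k * ∑ i, P i * W i k := by
    rw [Finset.mul_sum, Finset.mul_sum, Finset.mul_sum, Finset.sum_div, Finset.sum_div,
      ← Finset.sum_sub_distrib]
    refine Finset.sum_le_sum fun k _ => ?_
    have hS : M * ∑ i, P i * W i k = a k - M * v k := by rw [h k]; ring
    have : M ^ (p + 1) * (a k * ∑ i, P i * W i k) = M ^ p * (a k * (a k - M * v k)) := by
      rw [← hS]; ring
    rw [this]
    have : 0 ≤ M ^ p * (a k - M * v k) ^ 2 := by positivity
    have e5 : M ^ (p + 2) = M ^ p * M ^ 2 := by ring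
    rw [e5]
    nlinarith
  have h4 := mul_le_mul_of_nonneg_left h3 (show (0 : ℝ) ≤ (p : ℝ) + 2 by positivity)
  linarith

lemma energy {d : ℕ} {w m U : (Fin d → ℝ) → ℝ} {Λ : Fin d → ℝ} {H K : ℝ}
    (hw : ContDiff ℝ 2 w) (pw : ZPer w) (hm : ContDiff ℝ 1 m) (pm : ZPer m) (m0 : ∀ y, 0 < m y)
    (hU : ContDiff ℝ 1 U)
    (hj : ∀ y, (∑ i, (Λ i + pder i w y) ^ 2) / 2 + U y = Real.log (m y) + H)
    (hdiv : ∀ y, (∑ i, pder i (fun z => m z * (Λ i + pder i w z)) y) = 0)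
    (hK : ∀ y, ∑ k, pder k U y ^ 2 ≤ K) (p : ℕ) :
    ∫ y in cube d, m y ^ p * ∑ k, pder k m y ^ 2 ≤ K * ∫ y in cube d, m y ^ (p + 2) := by
  have hP : ∀ i, ContDiff ℝ 1 (fun z => Λ i + pder i w z) := fun i =>
    contDiff_const.add (pder_c1 hw i)
  have pP : ∀ i, ZPer (fun z => Λ i + pder i w z) := fun i x k => by
    simp only [pw.pder i x k]
  have hF : ∀ i, ContDiff ℝ 1 (fun z => m z * (Λ i + pder i w z)) := fun i => hm.mul (hP i)
  have pF : ∀ i, ZPer (fun z => m z * (Λ i + pder i w z)) := fun i => pm.mul (pP i)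
  have hmp : ContDiff ℝ 1 (fun z => m z ^ (p + 1)) := hm.pow _
  have pmp : ZPer (fun z => m z ^ (p + 1)) := fun x k => by simp only [pm x k]
  have hG : ∀ k, ContDiff ℝ 1 (fun z => (Λ k + pder k w z) * m z ^ (p + 1)) :=
    fun k => (hP k).mul hmp
  have pG : ∀ k, ZPer (fun z => (Λ k + pder k w z) * m z ^ (p + 1)) := fun k => (pP k).mul pmp
  have hsum : ∫ y in cube d, ∑ i, ∑ k, pder k (fun z => m z * (Λ i + pder i w z)) y *
      pder i (fun z => (Λ k + pder k w z) * m z ^ (p + 1)) y = 0 := by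
    have ci : ∀ i k j l, Integrable (fun y => pder k (fun z => m z * (Λ i + pder i w z)) y *
      pder j (fun z => (Λ l + pder l w z) * m z ^ (p + 1)) y) (volume.restrict (cube d)) :=
      fun i k j l => cube_int ((pder_cont (hF i) k).mul (pder_cont (hG l) j))
    rw [integral_finsetSum _ fun i _ => integrable_finsetSum _ fun k _ => ci i k i k]
    simp_rw [integral_finsetSum _ fun k _ => ci _ k _ k, int_swap (hF _) (hG _) (pF _) (pG _)]
    simp_rw [← integral_finsetSum _ fun k _ => ci _ _ k k]
    rw [← integral_finsetSum _ fun i _ => integrable_finsetSum _ fun k _ => ci i i k k]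
    simp_rw [← Finset.mul_sum]
    simp_rw [← Finset.sum_mul, hdiv]
    simp
  have hpt : ∀ y, ((p : ℝ) + 2) / 2 * (m y ^ p * (∑ k, pder k m y ^ 2) - K * m y ^ (p + 2)) ≤
      ∑ i, ∑ k, pder k (fun z => m z * (Λ i + pder i w z)) y *
      pder i (fun z => (Λ k + pder k w z) * m z ^ (p + 1)) y := by
    intro y
    have hgrad : ∀ k, pder k m y =
        m y * (∑ i, (Λ i + pder i w y) * pder k (pder i w) y + pder k U y) := by
      intro k
      have hd1 : ∀ i, DifferentiableAt ℝ (fun z => (Λ i + pder i w z) ^ 2) y := fun i =>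
        ((hP i).pow 2).differentiable (by simp) y
      have l : pder k (fun y => (∑ i, (Λ i + pder i w y) ^ 2) / 2 + U y) y =
          ∑ i, (Λ i + pder i w y) * pder k (pder i w) y + pder k U y := by
        have h1 : HasFDerivAt (fun y => (∑ i, (Λ i + pder i w y) ^ 2) / 2 + U y)
          ((2 : ℝ)⁻¹ • (∑ i, fderiv ℝ (fun z => (Λ i + pder i w z) ^ 2) y) + fderiv ℝ U y) y := by
          simp only [div_eq_inv_mul]
          exact ((HasFDerivAt.fun_sum fun i _ => (hd1 i).hasFDerivAt).const_mul _).add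
            ((hU.differentiable (by simp)) y).hasFDerivAt
        have h2 : ∀ i, fderiv ℝ (fun z => (Λ i + pder i w z) ^ 2) y (Pi.single k 1) =
            2 * (Λ i + pder i w y) * pder k (pder i w) y := by
          intro i
          have := pder_pow (hP i) 2 k y
          rw [pder_const_add] at this
          simpa [pder] using this
        show fderiv ℝ _ y _ = _
        rw [h1.fderiv]
        simp only [_root_.add_apply, _root_.smul_apply,
          _root_.sum_apply, h2, smul_eq_mul, Finset.mul_sum]
        congr 1
        refine Finset.sum_congr rfl fun i _ => ?_
        ring
      have r : pder k (fun y => Real.log (m y) + H) y = (m y)⁻¹ * pder k m y := by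
        have h1 := (((hm.differentiable (by simp)) y).hasFDerivAt.log (m0 y).ne').add_const H
        show fderiv ℝ _ y _ = _
        rw [h1.fderiv]
        simp [pder]
      rw [← l, funext hj, r]
      have := (m0 y).ne'
      field_simp
    have core := alg_core (fun i k => pder k (pder i w) y) (fun i k => pder_symm hw i k y)
      (fun k => pder k m y) (fun i => Λ i + pder i w y) (fun k => pder k U y) (m y) (m0 y) p hgrad
    have eq : ∀ i k, pder k (fun z => m z * (Λ i + pder i w z)) y *
      pder i (fun z => (Λ k + pder k w z) * m z ^ (p + 1)) y =
      (m y * pder k (pder i w) y + (Λ i + pder i w y) * pder k m y) *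
      ((Λ k + pder k w y) * ((p + 1) * m y ^ p * pder i m y) +
        m y ^ (p + 1) * pder k (pder i w) y) := by
      intro i k
      rw [pder_mul hm (hP i), pder_mul (hP k) hmp, pder_const_add, pder_const_add, pder_pow hm,
        pder_symm hw k i y]
      push_cast
      simp
    simp_rw [eq]
    refine le_trans ?_ core
    have := mul_le_mul_of_nonneg_left (hK y) (show 0 ≤ ((p : ℝ) + 2) / 2 * m y ^ (p + 2) by
      have := m0 y; positivity)
    linarith
  have cm := hm.continuous
  have cdm := fun k => pder_cont hm k
  have hle := integral_mono (μ := volume.restrict (cube d)) (cube_int (by fun_prop)) (cube_int (by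
      refine continuous_finsetSum _ fun i _ => continuous_finsetSum _ fun k _ => ?_
      exact (pder_cont (hF i) k).mul (pder_cont (hG k) i))) hpt
  rw [hsum, integral_const_mul, integral_sub (cube_int (by fun_prop)) (cube_int (by fun_prop)),
    integral_const_mul] at hle
  have hp : (0 : ℝ) < ((p : ℝ) + 2) / 2 := by positivity
  have := nonpos_of_mul_nonpos_right hle hp
  linarith

lemma sq_int_le {g : ℝ → ℝ} (hg : Continuous g) :
    (∫ t in (0 : ℝ)..1, g t) ^ 2 ≤ ∫ t in (0 : ℝ)..1, g t ^ 2 := by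
  set c := ∫ t in (0 : ℝ)..1, g t with hc
  have h : 0 ≤ ∫ t in (0 : ℝ)..1, (g t ^ 2 - (2 * c) * g t + c ^ 2) :=
    intervalIntegral.integral_nonneg (by norm_num) fun t _ => by nlinarith [sq_nonneg (g t - c)]
  have i1 : Continuous (fun t => g t ^ 2) := by fun_prop
  have i2 : Continuous (fun t => (2 * c) * g t) := by fun_prop
  have i3 : Continuous (fun t => g t ^ 2 - (2 * c) * g t) := by fun_prop
  rw [intervalIntegral.integral_add (i3.intervalIntegrable _ _)
    (continuous_const.intervalIntegrable _ _),
    intervalIntegral.integral_sub (i1.intervalIntegrable _ _) (i2.intervalIntegrable _ _),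
    intervalIntegral.integral_const_mul, ← hc] at h
  simp at h
  nlinarith

lemma fderiv_eq_sum {d : ℕ} (f : (Fin d → ℝ) → ℝ) (u z : Fin d → ℝ) :
    fderiv ℝ f u z = ∑ i, z i * pder i f u := by
  conv_lhs => rw [pi_eq_sum_univ' z]
  simp [pder, map_sum]

lemma shift_le {d : ℕ} {f : (Fin d → ℝ) → ℝ} (hf : ContDiff ℝ 1 f) (pf : ZPer f)
    (z : Fin d → ℝ) :
    ∫ y in cube d, (f (y + z) - f y) ^ 2 ≤
      (∑ i, z i ^ 2) * ∫ y in cube d, ∑ i, pder i f y ^ 2 := by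
  have cf := hf.continuous
  have cd := fun i => pder_cont hf i
  set g : (Fin d → ℝ) → ℝ := fun y => ∑ i, pder i f y ^ 2 with hg
  have cg : Continuous g := by rw [hg]; fun_prop
  have pg : ZPer g := fun x k => by
    rw [hg]; simp only [(pf.pder _) x k]
  have hpt : ∀ y, (f (y + z) - f y) ^ 2 ≤ (∑ i, z i ^ 2) * ∫ t in (0 : ℝ)..1, g (y + t • z) := by
    intro y
    have cG : Continuous (fun t : ℝ => ∑ i, z i * pder i f (y + t • z)) := by fun_prop
    have ftc : ∫ t in (0 : ℝ)..1, ∑ i, z i * pder i f (y + t • z) = f (y + z) - f y := by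
      have := intervalIntegral.integral_eq_sub_of_hasDerivAt (a := 0) (b := 1)
        (f := fun t : ℝ => f (y + t • z)) (f' := fun t : ℝ => ∑ i, z i * pder i f (y + t • z))
        (fun t _ => by
          have h1 : HasFDerivAt f (fderiv ℝ f (y + t • z)) (y + t • z) :=
            ((hf.differentiable (by simp)) _).hasFDerivAt
          have h2 : HasDerivAt (fun t : ℝ => y + t • z) z t := by
            simpa using ((hasDerivAt_id t).smul_const z).const_add y
          have := h1.comp_hasDerivAt t h2
          rwa [fderiv_eq_sum] at this) (cG.intervalIntegrable _ _)
      simpa using this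
    rw [← ftc]
    refine (sq_int_le cG).trans ?_
    rw [← intervalIntegral.integral_const_mul]
    refine intervalIntegral.integral_mono_on (by norm_num) ((cG.pow 2).intervalIntegrable _ _)
      (Continuous.intervalIntegrable (by fun_prop) _ _) fun t _ => ?_
    exact Finset.sum_mul_sq_le_sq_mul_sq _ _ _
  have hu : Continuous (uncurry fun (t : ℝ) (y : Fin d → ℝ) => g (y + t • z)) := by
    simp only [uncurry_def]; fun_prop
  have hi : Integrable (uncurry fun (t : ℝ) (y : Fin d → ℝ) => g (y + t • z))
      ((volume.restrict (Set.uIoc 0 1)).prod (volume.restrict (cube d))) := by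
    rw [Measure.prod_restrict]
    refine (hu.continuousOn.integrableOn_compact
      ((isCompact_Icc (a := (0 : ℝ)) (b := 1)).prod
      (isCompact_Icc (a := (0 : Fin d → ℝ)) (b := 1)))).mono_set ?_
    refine Set.prod_mono ?_ (cube_sub d)
    rw [Set.uIoc_of_le zero_le_one]
    exact Set.Ioc_subset_Icc_self
  have sw := intervalIntegral_integral_swap hi
  simp only [int_trans pg] at sw
  simp only [intervalIntegral.integral_const, sub_zero, one_smul] at sw
  rw [sw, ← integral_const_mul]
  refine integral_mono (cube_int (by fun_prop)) ?_ hpt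
  refine Integrable.const_mul ?_ _
  have := hi.integral_prod_right
  simpa [intervalIntegral.integral_of_le, uncurry, Set.uIoc_of_le] using this

lemma nash {d : ℕ} {f : (Fin d → ℝ) → ℝ} (hf : ContDiff ℝ 1 f) (pf : ZPer f)
    (f0 : ∀ y, 0 ≤ f y) {δ : ℝ} (hδ : 0 < δ) (hδ1 : δ ≤ 1)
    (hsm : d * δ ^ 2 * (∫ y in cube d, ∑ i, pder i f y ^ 2) ≤ (∫ y in cube d, f y ^ 2) / 4) :
    δ ^ d * (∫ y in cube d, f y ^ 2) ≤ 2 * (∫ y in cube d, f y) ^ 2 := by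
  have cf := hf.continuous
  have cd := fun i => pder_cont hf i
  set S : Set (Fin d → ℝ) := Set.univ.pi fun _ => Set.Ico 0 δ with hS
  have Sc : S ⊆ cube d := Set.pi_mono fun _ _ => Set.Ico_subset_Ico_right hδ1
  have Sm : MeasurableSet S := MeasurableSet.univ_pi fun _ => measurableSet_Ico
  have Sv : volume S = ENNReal.ofReal (δ ^ d) := by
    simp [hS, volume_pi_pi, ENNReal.ofReal_pow hδ.le]
  have key : ∀ z ∈ S, (∫ y in cube d, f y ^ 2) / 2 ≤ ∫ y in cube d, f y * f (y + z) := by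
    intro z hz
    have hz2 : ∑ i, z i ^ 2 ≤ d * δ ^ 2 := by
      have : ∑ i, z i ^ 2 ≤ ∑ i : Fin d, δ ^ 2 := Finset.sum_le_sum fun i _ => by
        have := Set.mem_univ_pi.1 hz i
        exact pow_le_pow_left₀ this.1 this.2.le 2
      simpa using this
    have h1 := shift_le hf pf z
    have h2 : (∑ i, z i ^ 2) * (∫ y in cube d, ∑ i, pder i f y ^ 2) ≤
        d * δ ^ 2 * (∫ y in cube d, ∑ i, pder i f y ^ 2) :=
      mul_le_mul_of_nonneg_right hz2 (integral_nonneg fun y => by positivity)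
    have h3 := integral_mono (μ := volume.restrict (cube d))
      (f := fun y => 3 / 4 * f y ^ 2 - (f (y + z) - f y) ^ 2) (g := fun y => f y * f (y + z))
      (cube_int (by fun_prop)) (cube_int (by fun_prop)) (fun y => by
        show 3 / 4 * f y ^ 2 - (f (y + z) - f y) ^ 2 ≤ f y * f (y + z)
        nlinarith [sq_nonneg (f (y + z) - f y + f y / 2)])
    rw [integral_sub (cube_int (by fun_prop)) (cube_int (by fun_prop)), integral_const_mul] at h3
    linarith
  have hu : Continuous (uncurry fun (z : Fin d → ℝ) (y : Fin d → ℝ) => f y * f (y + z)) := by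
    simp only [uncurry_def]; fun_prop
  have hi : Integrable (uncurry fun (z : Fin d → ℝ) (y : Fin d → ℝ) => f y * f (y + z))
      ((volume.restrict (cube d)).prod (volume.restrict (cube d))) := by
    rw [Measure.prod_restrict]
    exact (hu.continuousOn.integrableOn_compact
      ((isCompact_Icc (a := (0 : Fin d → ℝ)) (b := 1)).prod
      (isCompact_Icc (a := (0 : Fin d → ℝ)) (b := 1)))).mono_set
      (Set.prod_mono (cube_sub d) (cube_sub d))
  have hJ : IntegrableOn (fun z => ∫ y in cube d, f y * f (y + z)) (cube d) := hi.integral_prod_left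
  have A : δ ^ d * ((∫ y in cube d, f y ^ 2) / 2) ≤ ∫ z in S, ∫ y in cube d, f y * f (y + z) := by
    have := setIntegral_mono_on (μ := volume) (s := S)
      (f := fun _ => (∫ y in cube d, f y ^ 2) / 2)
      (integrableOn_const (by rw [Sv]; exact ENNReal.ofReal_ne_top)) (hJ.mono_set Sc) Sm key
    rw [setIntegral_const, Measure.real, Sv, ENNReal.toReal_ofReal (by positivity)] at this
    simpa using this
  have B : ∫ z in S, ∫ y in cube d, f y * f (y + z) ≤
      ∫ z in cube d, ∫ y in cube d, f y * f (y + z) :=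
    setIntegral_mono_set hJ (Eventually.of_forall fun z => integral_nonneg fun y =>
      mul_nonneg (f0 _) (f0 _)) (Eventually.of_forall Sc)
  have C : ∫ z in cube d, ∫ y in cube d, f y * f (y + z) = (∫ y in cube d, f y) ^ 2 := by
    rw [integral_integral_swap hi]
    have : ∀ y, ∫ z in cube d, f y * f (y + z) = f y * ∫ z in cube d, f z := fun y => by
      rw [integral_const_mul, ← int_trans pf y]
      simp only [add_comm y]
    simp_rw [this, integral_mul_const]
    ring
  linarith

lemma exists_lt_big {c r : ℝ} (hc : 0 < c) (hr : 1 < r) : ∃ k : ℕ, 1 < c * r ^ (2 ^ k) := by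
  obtain ⟨n, hn⟩ := pow_unbounded_of_one_lt (1 / c) hr
  refine ⟨n, ?_⟩
  have : r ^ n ≤ r ^ (2 ^ n) := pow_le_pow_right₀ hr.le Nat.lt_two_pow_self.le
  rw [div_lt_iff₀ hc] at hn
  nlinarith

lemma sup_le_of_moments {d : ℕ} {m : (Fin d → ℝ) → ℝ} (hm : Continuous m) (pm : ZPer m)
    (m0 : ∀ y, 0 < m y) {E : ℝ} (hE : 0 < E)
    (h : ∀ k : ℕ, ∫ y in cube d, m y ^ (2 ^ k) ≤ E ^ (2 ^ k)) (y : Fin d → ℝ) : m y ≤ E := by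
  by_contra hcon
  push Not at hcon
  obtain ⟨E', h1, h2⟩ := exists_between hcon
  set z : Fin d → ℝ := y - fun _ => 1 / 2 with hz
  set U : Set (Fin d → ℝ) := {u | E' < m (u + z)} ∩ Set.univ.pi fun _ => Set.Ioo 0 1 with hU
  have Uo : IsOpen U := (isOpen_lt continuous_const (by fun_prop)).inter
    (isOpen_set_pi Set.finite_univ fun _ _ => isOpen_Ioo)
  have Une : U.Nonempty := ⟨fun _ => 1 / 2, by
    refine ⟨?_, fun i _ => by norm_num⟩
    simpa [hz] using h2⟩
  have Uc : U ⊆ cube d := Set.inter_subset_right.trans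
    (Set.pi_mono fun _ _ => Set.Ioo_subset_Ico_self)
  have Ufin : volume U ≠ ⊤ := ne_top_of_le_ne_top (by rw [cube_vol]; exact ENNReal.one_ne_top)
    (measure_mono Uc)
  have Upos : 0 < volume.real U := ENNReal.toReal_pos (Uo.measure_pos volume Une).ne' Ufin
  obtain ⟨k, hk⟩ := exists_lt_big Upos ((one_lt_div hE).2 h1)
  have cg : Continuous fun u => m (u + z) ^ (2 ^ k) := by fun_prop
  have pk : ZPer fun u => m u ^ (2 ^ k) := fun x k => by simp only [pm x k]
  have a1 : volume.real U * E' ^ (2 ^ k) ≤ ∫ u in U, m (u + z) ^ (2 ^ k) := by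
    have := setIntegral_mono_on (μ := volume) (s := U) (f := fun _ => E' ^ (2 ^ k))
      (g := fun u => m (u + z) ^ (2 ^ k))
      (integrableOn_const Ufin) (IntegrableOn.mono_set (cube_int cg) Uc)
      Uo.measurableSet (fun u hu => pow_le_pow_left₀ (hE.trans h1).le hu.1.le _)
    rw [setIntegral_const] at this
    simpa using this
  have a2 : ∫ u in U, m (u + z) ^ (2 ^ k) ≤ ∫ u in cube d, m (u + z) ^ (2 ^ k) :=
    setIntegral_mono_set (cube_int cg) (Eventually.of_forall fun u => pow_nonneg (m0 _).le _)
      (Eventually.of_forall Uc)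
  rw [int_trans pk z] at a2
  have a3 := (a1.trans a2).trans (h k)
  rw [div_pow, ← mul_div_assoc, one_lt_div (by positivity)] at hk
  linarith

lemma moser {d : ℕ} {m : (Fin d → ℝ) → ℝ} {K : ℝ} (hm : ContDiff ℝ 1 m) (pm : ZPer m)
    (m0 : ∀ y, 0 < m y) (h1 : ∫ y in cube d, m y = 1) (hK : 0 ≤ K)
    (hen : ∀ p : ℕ, ∫ y in cube d, m y ^ p * ∑ k, pder k m y ^ 2 ≤
      K * ∫ y in cube d, m y ^ (p + 2)) (y : Fin d → ℝ) :
    m y ≤ 2 * (4 * d * K + 1) ^ d * 2 ^ d := by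
  set B : ℝ := 4 * d * K + 1 with hB
  have B1 : 1 ≤ B := by
    have : 0 ≤ 4 * d * K := by positivity
    linarith
  have BK : d * K ≤ B ^ 2 / 4 := by nlinarith
  have step : ∀ k : ℕ, ∫ y in cube d, m y ^ (2 ^ (k + 1)) ≤
      2 * B ^ d * (2 ^ d) ^ k * (∫ y in cube d, m y ^ (2 ^ k)) ^ 2 := by
    intro k
    have hn1 : 1 ≤ 2 ^ k := Nat.one_le_two_pow
    have hf : ContDiff ℝ 1 fun u => m u ^ (2 ^ k) := hm.pow _
    have pf : ZPer fun u => m u ^ (2 ^ k) := fun x k => by simp only [pm x k]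
    have e2 : ∀ u, (m u ^ (2 ^ k)) ^ 2 = m u ^ (2 ^ (k + 1)) := fun u => by
      rw [← pow_mul, pow_succ]
    have e3 : ∀ u, ∑ i, pder i (fun u => m u ^ (2 ^ k)) u ^ 2 =
        ((2 : ℝ) ^ k) ^ 2 * (m u ^ (2 * (2 ^ k - 1)) * ∑ i, pder i m u ^ 2) := by
      intro u
      simp_rw [pder_pow hm, Finset.mul_sum]
      refine Finset.sum_congr rfl fun i _ => ?_
      push_cast
      rw [mul_comm 2, pow_mul]
      ring
    have hen' := hen (2 * (2 ^ k - 1))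
    have e4 : 2 * (2 ^ k - 1) + 2 = 2 ^ (k + 1) := by
      rw [pow_succ]; omega
    rw [e4] at hen'
    have a0 : 0 ≤ ∫ y in cube d, m y ^ (2 ^ (k + 1)) :=
      integral_nonneg fun y => pow_nonneg (m0 y).le _
    have hB0 : 0 < B := by linarith
    have hb : 1 ≤ B * 2 ^ k := one_le_mul_of_one_le_of_one_le B1 (one_le_pow₀ (by norm_num))
    have hN := nash hf pf (fun y => pow_nonneg (m0 y).le _) (δ := (B * 2 ^ k)⁻¹)
      (by positivity) (inv_le_one_of_one_le₀ hb) (by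
        simp_rw [e2, e3, integral_const_mul]
        have h5 : (d : ℝ) * (B * 2 ^ k)⁻¹ ^ 2 * (((2 : ℝ) ^ k) ^ 2 *
            ∫ y in cube d, m y ^ (2 * (2 ^ k - 1)) * ∑ i, pder i m y ^ 2) ≤
            (d : ℝ) * (B * 2 ^ k)⁻¹ ^ 2 * (((2 : ℝ) ^ k) ^ 2 *
            (K * ∫ y in cube d, m y ^ (2 ^ (k + 1)))) := by gcongr
        refine h5.trans ?_
        have h6 : (d : ℝ) * (B * 2 ^ k)⁻¹ ^ 2 * (((2 : ℝ) ^ k) ^ 2 *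
            (K * ∫ y in cube d, m y ^ (2 ^ (k + 1)))) =
            (d * K / B ^ 2) * ∫ y in cube d, m y ^ (2 ^ (k + 1)) := by field_simp
        rw [h6]
        have h7 : d * K / B ^ 2 ≤ 1 / 4 := by
          rw [div_le_iff₀ (by positivity)]; linarith
        have := mul_le_mul_of_nonneg_right h7 a0
        linarith)
    simp_rw [e2] at hN
    rw [inv_pow, inv_mul_le_iff₀ (by positivity), mul_pow] at hN
    refine hN.trans (le_of_eq ?_)
    ring
  have claim : ∀ k : ℕ, 2 * B ^ d * (2 ^ d) ^ (k + 1) * (∫ y in cube d, m y ^ (2 ^ k)) ≤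
      (2 * B ^ d * 2 ^ d) ^ (2 ^ k) := by
    intro k
    induction k with
    | zero => simp [h1]
    | succ k ih =>
      have a0 : 0 ≤ ∫ y in cube d, m y ^ (2 ^ k) := integral_nonneg fun y => pow_nonneg (m0 y).le _
      have q := mul_le_mul_of_nonneg_left (step k)
        (show 0 ≤ 2 * B ^ d * (2 ^ d) ^ (k + 1 + 1) by positivity)
      refine q.trans ?_
      have := pow_le_pow_left₀ (by positivity) ih 2
      rw [← pow_mul (2 * B ^ d * 2 ^ d), ← pow_succ 2 k] at this
      refine le_trans (le_of_eq ?_) this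
      ring
  refine sup_le_of_moments hm.continuous pm m0 (by positivity) (fun k => ?_) y
  refine le_trans ?_ (claim k)
  have a0 : 0 ≤ ∫ y in cube d, m y ^ (2 ^ k) := integral_nonneg fun y => pow_nonneg (m0 y).le _
  refine le_mul_of_one_le_left a0 ?_
  have b1 : 1 ≤ B ^ d := one_le_pow₀ B1
  have b2 : (1 : ℝ) ≤ (2 ^ d) ^ (k + 1) := one_le_pow₀ (one_le_pow₀ (by norm_num))
  nlinarith

lemma bdd_of_per {d : ℕ} {G : (Fin d → ℝ) → (Fin d → ℝ) → ℝ} (hG : Continuous (uncurry G))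
    (p1 : ∀ y, ZPer fun x => G x y) (p2 : ∀ x, ZPer (G x)) : ∃ B, 0 ≤ B ∧ ∀ x y, |G x y| ≤ B := by
  obtain ⟨B, hB⟩ := ((isCompact_Icc (a := (0 : Fin d → ℝ)) (b := 1)).prod
    (isCompact_Icc (a := (0 : Fin d → ℝ)) (b := 1))).exists_bound_of_continuousOn hG.continuousOn
  have red : ∀ x : Fin d → ℝ, (fun i => x i + ((-⌊x i⌋ : ℤ) : ℝ)) ∈ Set.Icc (0 : Fin d → ℝ) 1 := by
    intro x
    constructor
    · intro i
      have := Int.floor_le (x i)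
      push_cast
      simpa using this
    · intro i
      have := (Int.lt_floor_add_one (x i)).le
      push_cast
      simp only [Pi.one_apply]
      linarith
  have hb : ∀ x y, |G x y| ≤ B := by
    intro x y
    have := hB (_, _) ⟨red x, red y⟩
    simp only [uncurry, Real.norm_eq_abs] at this
    rw [p2 _ y (fun i => -⌊y i⌋)] at this
    have h1 := p1 y x (fun i => -⌊x i⌋)
    simp only at h1
    rwa [h1] at this
  exact ⟨B, (abs_nonneg _).trans (hb 0 0), hb⟩

lemma H_le {d : ℕ} {w m U : (Fin d → ℝ) → ℝ} {Λ : Fin d → ℝ} {H K : ℝ}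
    (hw : ContDiff ℝ 2 w) (pw : ZPer w) (hm : ContDiff ℝ 1 m) (pm : ZPer m) (m0 : ∀ y, 0 < m y)
    (hU : Continuous U)
    (hj : ∀ y, (∑ i, (Λ i + pder i w y) ^ 2) / 2 + U y = Real.log (m y) + H)
    (hdiv : ∀ y, (∑ i, pder i (fun z => m z * (Λ i + pder i w z)) y) = 0)
    (h1 : ∫ y in cube d, m y = 1) (hK : ∀ y, U y ≤ K) :
    H ≤ (∑ i, Λ i ^ 2) / 2 + K := by
  have hw1 : ContDiff ℝ 1 w := hw.of_le (by norm_num)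
  have hP : ∀ i, ContDiff ℝ 1 (fun z => Λ i + pder i w z) := fun i =>
    contDiff_const.add (pder_c1 hw i)
  have pP : ∀ i, ZPer (fun z => Λ i + pder i w z) := fun i x k => by
    simp only [pw.pder i x k]
  have hF : ∀ i, ContDiff ℝ 1 (fun z => m z * (Λ i + pder i w z)) := fun i => hm.mul (hP i)
  have pF : ∀ i, ZPer (fun z => m z * (Λ i + pder i w z)) := fun i => pm.mul (pP i)
  have cm := hm.continuous
  have cw := hw.continuous
  have cdw := fun i => pder_cont hw1 i
  have cF := fun i => pder_cont (hF i) i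
  have orth : ∫ y in cube d, ∑ i, m y * (Λ i + pder i w y) * pder i w y = 0 := by
    rw [integral_finsetSum _ fun i _ => cube_int (by fun_prop)]
    simp_rw [int_parts (hF _) hw1 (pF _) pw]
    rw [Finset.sum_neg_distrib, ← integral_finsetSum _ fun i _ => cube_int (by fun_prop)]
    simp_rw [← Finset.mul_sum, hdiv]
    simp
  have hpt : ∀ y, (H - K + 1 - (∑ i, Λ i ^ 2) / 2) * m y - 1 ≤
      ∑ i, m y * (Λ i + pder i w y) * pder i w y := by
    intro y
    have hlog : m y - 1 ≤ m y * Real.log (m y) := by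
      have := Real.one_sub_inv_le_log_of_pos (m0 y)
      have h2 := mul_le_mul_of_nonneg_left this (m0 y).le
      have h3 : m y * (1 - (m y)⁻¹) = m y - 1 := by
        have := (m0 y).ne'
        field_simp
      linarith
    have hs : (∑ i, (Λ i + pder i w y) ^ 2) / 2 - (∑ i, Λ i ^ 2) / 2 ≤
        ∑ i, (Λ i + pder i w y) * pder i w y := by
      rw [Finset.sum_div, Finset.sum_div, ← Finset.sum_sub_distrib]
      refine Finset.sum_le_sum fun i _ => ?_
      nlinarith [sq_nonneg (pder i w y)]
    have hs2 := mul_le_mul_of_nonneg_left hs (m0 y).le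
    simp_rw [mul_assoc, ← Finset.mul_sum]
    refine le_trans ?_ hs2
    have e : (∑ i, (Λ i + pder i w y) ^ 2) / 2 = Real.log (m y) + H - U y := by
      linarith [hj y]
    rw [e]
    have := mul_le_mul_of_nonneg_left (hK y) (m0 y).le
    linarith
  have hle := integral_mono (μ := volume.restrict (cube d)) (cube_int (by fun_prop))
    (cube_int (by fun_prop)) hpt
  rw [orth, integral_sub (cube_int (by fun_prop)) (cube_int (by fun_prop)),
    integral_const_mul, h1] at hle
  simp [Measure.real, cube_vol] at hle
  linarith

/-- a uniform (in `x` and `Λ`) upper bound for `m̃` and the bound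
`sup_y |Λ + ∇_y w̃(x,Λ,y)| ≤ C + |Λ|` for solutions of the cell problem. -/
theorem stmt13 {d : ℕ} (V : (Fin d → ℝ) → (Fin d → ℝ) → ℝ) (hV : SmoothV V)
    (w m : (Fin d → ℝ) → (Fin d → ℝ) → (Fin d → ℝ) → ℝ)
    (H : (Fin d → ℝ) → (Fin d → ℝ) → ℝ)
    (hsol : ∀ x Λ, CellSolAt V x Λ (w x Λ) (m x Λ) (H x Λ)) :
    ∃ C > 0, ∀ (x Λ : Fin d → ℝ),
      (∀ y, m x Λ y ≤ C) ∧
      (∀ y, Real.sqrt (∑ i, (Λ i + pder i (w x Λ) y) ^ 2)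
          ≤ C + Real.sqrt (∑ i, (Λ i) ^ 2)) := by
  obtain ⟨hV1, hV2, hV3⟩ := hV
  have hVx : ∀ x, ContDiff ℝ 1 (V x) := fun x =>
    (hV1.of_le (by exact_mod_cast le_top)).comp (contDiff_const.prodMk contDiff_id)
  obtain ⟨B, hB0, hB⟩ := bdd_of_per hV1.continuous hV2 hV3
  have hpd : ∀ k x y, pder k (V x) y = fderiv ℝ (uncurry V) (x, y) (0, Pi.single k 1) := by
    intro k x y
    have h1 : HasFDerivAt (uncurry V) (fderiv ℝ (uncurry V) (x, y)) (x, y) :=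
      (hV1.differentiable (by simp) _).hasFDerivAt
    have h2 : HasFDerivAt (fun y : Fin d → ℝ => (x, y))
      (ContinuousLinearMap.inr ℝ (Fin d → ℝ) (Fin d → ℝ)) y := hasFDerivAt_prodMk_right x y
    have h3 : HasFDerivAt (V x) _ y := h1.comp y h2
    unfold pder
    rw [h3.fderiv]
    simp
  obtain ⟨K, hK0, hK⟩ := bdd_of_per (G := fun x y => ∑ k, pder k (V x) y ^ 2) (by
      simp only [hpd, uncurry_def]
      have := hV1.continuous_fderiv (by simp)
      fun_prop)
    (fun y x k => by
      have : V (fun i => x i + (k i : ℝ)) = V x := funext fun y => hV2 y x k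
      simp only [this])
    (fun x y k => by simp only [((hV3 x).pder _) y k])
  set C1 : ℝ := 2 * (4 * d * K + 1) ^ d * 2 ^ d with hC1
  have C1pos : 0 < C1 := by positivity
  have hm : ∀ x Λ y, m x Λ y ≤ C1 := by
    intro x Λ y
    obtain ⟨hw, pw, hm, pm, m0, hj, hdiv, h1⟩ := hsol x Λ
    exact moser hm pm m0 h1 hK0 (fun p => energy hw pw hm pm m0 (hVx x) hj hdiv
      (fun y => (le_abs_self _).trans (hK x y)) p) y
  set C2 : ℝ := 2 * (|Real.log C1| + 2 * B) with hC2
  have C2n : 0 ≤ C2 := by positivity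
  refine ⟨C1 + Real.sqrt C2, by positivity, fun x Λ => ⟨fun y => ?_, fun y => ?_⟩⟩
  · have := Real.sqrt_nonneg C2
    linarith [hm x Λ y]
  · have hmy := hm x Λ y
    obtain ⟨hw, pw, hm, pm, m0, hj, hdiv, h1⟩ := hsol x Λ
    have hH := H_le hw pw hm pm m0 (hVx x).continuous hj hdiv h1
      (fun y => (le_abs_self _).trans (hB x y))
    have hlog := (Real.log_le_log (m0 y) hmy).trans (le_abs_self _)
    have hVl := neg_le_of_abs_le (hB x y)
    have e := hj y
    have le : ∑ i, (Λ i + pder i (w x Λ) y) ^ 2 ≤ C2 + ∑ i, Λ i ^ 2 := by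
      rw [hC2]; linarith
    have s0 : 0 ≤ ∑ i, Λ i ^ 2 := by positivity
    have := Real.sqrt_nonneg C2
    have := Real.sqrt_nonneg (∑ i, Λ i ^ 2)
    have h2 : Real.sqrt (∑ i, (Λ i + pder i (w x Λ) y) ^ 2) ≤
        Real.sqrt C2 + Real.sqrt (∑ i, Λ i ^ 2) := by
      rw [Real.sqrt_le_left (by positivity)]
      nlinarith [Real.sq_sqrt C2n, Real.sq_sqrt s0]
    linarith
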